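/- Let (H, g) be a finite type pivotal Hopf G-coalgebra over a field k which is unimodular, and let μ be a right G-integral for H with μ_α ≠ 0 for every α ∈ G. Then for every α ∈ G the symmetrised right G-integral μ̃_α(x) := μ_α(g_α x) is a symmetric linear form on H_α, i.e. μ̃_α(xy) = μ̃_α(yx) for all x, y ∈ H_α, and the bilinear form (x, y) ↦ μ̃_α(xy) on H_α is non-degenerate (if μ̃_α(xy) = 0 for all x ∈ H_α, then y = 0). The same holds for the symmetrised left G-integral μ̃^l_α(x) := μ^l_α(g_α⁻¹ x) associated to a left G-integral μ^l with μ^l_α ≠ 0 for every α. -/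

import Mathlib

/-!
Why the theorem holds. Fix `a b = 1` in `G`, let `Λ ∈ H₁` be a nonzero two-sided cointegral and
write `Λ₁ ⊗ Λ₂ ∈ H_a ⊗ H_b` for its coproduct. Coassociativity and the antipode axiom give
`S(y)Λ₁ ⊗ Λ₂ = Λ₁ ⊗ yΛ₂` for `y ∈ H_b` (`antipode_mul_delta`) and
`Λ₁u ⊗ Λ₂ = Λ₁ ⊗ Λ₂S(u)` for `u ∈ H_a` (`delta_mul_antipode`).
Applying a right integral, for which `μ(Λ₁)Λ₂ = μ(Λ)1`, yields
`μ(S(y)Λ₁)Λ₂ = μ(Λ)y` and `μ(Λ₁u)Λ₂ = μ(Λ)S(u)`.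

* `μ(Λ) ≠ 0`: otherwise `μ(Λ₁u)Λ₂ = 0` for all `u`, so
  `μ(y)Λ = μ(Λ₁S(Λ₂)y)Λ₃ = 0` for all `y` (`smul_eq_zero_of_right`), against `μ ≠ 0`, `Λ ≠ 0`.
* The pivot makes `S` bijective, since `S²` is a conjugation. Hence `φ ↦ φ(Λ₁)Λ₂` is a surjection
  from the dual of `H_a` onto `H_b`, spaces of equal dimension, and so is injective. As the forms
  `μ(· u)` and `μ(S²(u) ·)` have the same image `μ(Λ)S(u)`, they agree:
  `μ(w u) = μ(g u g⁻¹ w)`, which is the symmetry of `μ(g ·)`.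
  Nondegeneracy follows from the injectivity of `u ↦ μ(Λ)S(u)` (`form_eq_of_pairing`).

For a left integral the same argument runs with `φ ↦ Λ₁φ(Λ₂)`. Neither the antimultiplicativity of
the antipode nor uniqueness of integrals is needed.
-/


open scoped TensorProduct

/-- Transport along an equality of indices, as an algebra isomorphism. -/
def castAlg (k : Type) [CommSemiring k] {G : Type} {H : G → Type}
    [∀ γ : G, Ring (H γ)] [∀ γ : G, Algebra k (H γ)]
    {γ γ' : G} (h : γ = γ') : H γ ≃ₐ[k] H γ' := by
  subst h; exact AlgEquiv.refl

/-- A Hopf `G`-coalgebra over a field `k`. -/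
structure HopfGCoalgebra (k G : Type) [Field k] [Group G] (H : G → Type)
    [∀ γ : G, Ring (H γ)] [∀ γ : G, Algebra k (H γ)] where
  Δ : ∀ α β : G, H (α * β) →ₐ[k] (H α ⊗[k] H β)
  ε : H (1 : G) →ₐ[k] k
  S : ∀ γ : G, H γ →ₗ[k] H γ⁻¹
  coassoc : ∀ (α β γ : G) (x : H (α * β * γ)),
    (TensorProduct.map (Δ α β).toLinearMap LinearMap.id) (Δ (α * β) γ x)
      = (TensorProduct.assoc k (H α) (H β) (H γ)).symm
          ((TensorProduct.map LinearMap.id (Δ β γ).toLinearMap)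
            (Δ α (β * γ) (castAlg k (mul_assoc α β γ) x)))
  counit_right : ∀ (α : G) (x : H (α * 1)),
    (TensorProduct.rid k (H α)) ((TensorProduct.map LinearMap.id ε.toLinearMap) (Δ α 1 x))
      = castAlg k (mul_one α) x
  counit_left : ∀ (α : G) (x : H (1 * α)),
    (TensorProduct.lid k (H α)) ((TensorProduct.map ε.toLinearMap LinearMap.id) (Δ 1 α x))
      = castAlg k (one_mul α) x
  antipode_left : ∀ (α : G) (x : H (α⁻¹ * α)),
    (LinearMap.mul' k (H α))
      ((TensorProduct.map ((castAlg k (inv_inv α)).toLinearMap ∘ₗ S α⁻¹) LinearMap.id)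
        (Δ α⁻¹ α x))
      = ε (castAlg k (inv_mul_cancel α) x) • 1
  antipode_right : ∀ (α : G) (x : H (α * α⁻¹)),
    (LinearMap.mul' k (H α))
      ((TensorProduct.map LinearMap.id ((castAlg k (inv_inv α)).toLinearMap ∘ₗ S α⁻¹))
        (Δ α α⁻¹ x))
      = ε (castAlg k (mul_inv_cancel α) x) • 1

namespace HopfGCoalgebra

variable {k G : Type} [Field k] [Group G] {H : G → Type}
  [∀ γ : G, Ring (H γ)] [∀ γ : G, Algebra k (H γ)]

/-- A family of linear forms is a right `G`-integral. -/
def IsRightIntegral (D : HopfGCoalgebra k G H) (μ : ∀ γ : G, H γ →ₗ[k] k) : Prop :=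
  ∀ (α β : G) (x : H (α * β)),
    (TensorProduct.lid k (H β)) ((TensorProduct.map (μ α) LinearMap.id) (D.Δ α β x))
      = μ (α * β) x • 1

/-- A family of linear forms is a left `G`-integral. -/
def IsLeftIntegral (D : HopfGCoalgebra k G H) (μ : ∀ γ : G, H γ →ₗ[k] k) : Prop :=
  ∀ (α β : G) (x : H (α * β)),
    (TensorProduct.rid k (H α)) ((TensorProduct.map LinearMap.id (μ β)) (D.Δ α β x))
      = μ (α * β) x • 1

/-- A family of invertible elements is a pivot. -/
structure IsPivot (D : HopfGCoalgebra k G H) (g : ∀ γ : G, (H γ)ˣ) : Prop where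
  delta : ∀ α β : G, D.Δ α β (g (α * β) : H (α * β)) = (g α : H α) ⊗ₜ[k] (g β : H β)
  counit : D.ε (g 1 : H 1) = 1
  antipode : ∀ (α : G) (x : H α),
    castAlg k (inv_inv α) (D.S α⁻¹ (D.S α x)) = (g α : H α) * x * ((g α)⁻¹ : (H α)ˣ)

/-- `H` is unimodular if `H₁` admits a nonzero two-sided cointegral. -/
def IsUnimodular (D : HopfGCoalgebra k G H) : Prop :=
  ∃ Λ : H 1, Λ ≠ 0 ∧ ∀ h : H 1, h * Λ = D.ε h • Λ ∧ Λ * h = D.ε h • Λ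

/-- A `G`-comodulus for a right `G`-integral `μ`. -/
structure IsComodulus (D : HopfGCoalgebra k G H) (μ : ∀ γ : G, H γ →ₗ[k] k)
    (a : ∀ γ : G, (H γ)ˣ) : Prop where
  delta : ∀ α β : G, D.Δ α β (a (α * β) : H (α * β)) = (a α : H α) ⊗ₜ[k] (a β : H β)
  counit : D.ε (a 1 : H 1) = 1
  rel : ∀ (α β : G) (x : H (α * β)),
    (TensorProduct.rid k (H α)) ((TensorProduct.map LinearMap.id (μ β)) (D.Δ α β x))
      = μ (α * β) x • (a α : H α)

end HopfGCoalgebra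

/-! ### The axioms with transported indices -/

namespace HopfGCoalgebra

lemma castAlg_symm_apply {k G : Type} [Field k] {H : G → Type} [∀ γ : G, Ring (H γ)]
    [∀ γ : G, Algebra k (H γ)] {c d : G} (h : c = d) (x : H d) :
    castAlg k h (castAlg k h.symm x) = x := by
  subst h; rfl

variable {k G : Type} [Field k] [Group G] {H : G → Type}
  [∀ γ : G, Ring (H γ)] [∀ γ : G, Algebra k (H γ)]

/-- The coproduct `H_c → H_a ⊗ H_b` for any `c` equal to `a * b`; carrying the equation as an
argument keeps transports out of the computations. -/
noncomputable def cop (D : HopfGCoalgebra k G H) {a b c : G} (h : a * b = c) :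
    H c →ₐ[k] (H a ⊗[k] H b) :=
  (D.Δ a b).comp (castAlg k h.symm : H c ≃ₐ[k] H (a * b)).toAlgHom

/-- The antipode `H_a → H_b` for any `b` that is inverse to `a`. -/
noncomputable def anti (D : HopfGCoalgebra k G H) {a b : G} (h : a * b = 1) :
    H a →ₗ[k] H b :=
  (castAlg k (inv_eq_of_mul_eq_one_right h) : H a⁻¹ ≃ₐ[k] H b).toLinearMap ∘ₗ D.S a

lemma cop_coassoc (D : HopfGCoalgebra k G H) {a b c d e f : G} (hab : a * b = d) (hbc : b * c = e)
    (h1 : d * c = f) (h2 : a * e = f) (x : H f) :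
    TensorProduct.assoc k (H a) (H b) (H c)
      ((TensorProduct.map (D.cop hab).toLinearMap LinearMap.id) (D.cop h1 x))
      = (TensorProduct.map LinearMap.id (D.cop hbc).toLinearMap) (D.cop h2 x) := by
  subst hab hbc h1
  have := D.coassoc a b c x
  rw [← LinearEquiv.eq_symm_apply]
  exact this

lemma cop_counit_right (D : HopfGCoalgebra k G H) {a : G} (h : a * 1 = a) (x : H a) :
    (TensorProduct.rid k (H a)) ((TensorProduct.map LinearMap.id D.ε.toLinearMap) (D.cop h x))
      = x := by
  exact (D.counit_right a _).trans (castAlg_symm_apply h x)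

lemma cop_counit_left (D : HopfGCoalgebra k G H) {a : G} (h : 1 * a = a) (x : H a) :
    (TensorProduct.lid k (H a)) ((TensorProduct.map D.ε.toLinearMap LinearMap.id) (D.cop h x))
      = x := by
  exact (D.counit_left a _).trans (castAlg_symm_apply h x)

lemma cop_antipode_left (D : HopfGCoalgebra k G H) {a b : G} (h : b * a = 1) (x : H 1) :
    (LinearMap.mul' k (H a)) ((TensorProduct.map (D.anti h) LinearMap.id) (D.cop h x))
      = D.ε x • 1 := by
  obtain rfl : b = a⁻¹ := eq_inv_of_mul_eq_one_left h
  exact (D.antipode_left a _).trans (congrArg (fun z => D.ε z • (1 : H a)) (castAlg_symm_apply h x))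

lemma cop_antipode_right (D : HopfGCoalgebra k G H) {a b : G} (h : a * b = 1) (h' : b * a = 1)
    (x : H 1) :
    (LinearMap.mul' k (H a)) ((TensorProduct.map LinearMap.id (D.anti h')) (D.cop h x))
      = D.ε x • 1 := by
  obtain rfl : b = a⁻¹ := eq_inv_of_mul_eq_one_left h'
  exact (D.antipode_right a _).trans (congrArg (fun z => D.ε z • (1 : H a)) (castAlg_symm_apply h x))

lemma cop_rightIntegral {D : HopfGCoalgebra k G H} {μ : ∀ γ : G, H γ →ₗ[k] k}
    (hμ : D.IsRightIntegral μ) {a b c : G} (h : a * b = c) (x : H c) :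
    (TensorProduct.lid k (H b)) ((TensorProduct.map (μ a) LinearMap.id) (D.cop h x))
      = μ c x • 1 := by
  subst h; exact hμ a b x

lemma cop_leftIntegral {D : HopfGCoalgebra k G H} {μ : ∀ γ : G, H γ →ₗ[k] k}
    (hμ : D.IsLeftIntegral μ) {a b c : G} (h : a * b = c) (x : H c) :
    (TensorProduct.rid k (H a)) ((TensorProduct.map LinearMap.id (μ b)) (D.cop h x))
      = μ c x • 1 := by
  subst h; exact hμ a b x

lemma anti_anti {D : HopfGCoalgebra k G H} {g : ∀ γ : G, (H γ)ˣ} (hg : D.IsPivot g) {a b : G}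
    (h : a * b = 1) (h' : b * a = 1) (x : H a) :
    D.anti h' (D.anti h x) = (g a : H a) * x * ((g a)⁻¹ : (H a)ˣ) := by
  obtain rfl : b = a⁻¹ := eq_inv_of_mul_eq_one_left h'
  exact hg.antipode a x

/-- With a pivot, `S²` is a conjugation, so `S` is injective. -/
lemma anti_injective {D : HopfGCoalgebra k G H} {g : ∀ γ : G, (H γ)ˣ} (hg : D.IsPivot g) {a b : G}
    (h : a * b = 1) : Function.Injective (D.anti h) := by
  intro x y hxy
  have h' : b * a = 1 := mul_eq_one_comm.mp h
  have := congrArg (D.anti h') hxy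
  rw [anti_anti hg, anti_anti hg] at this
  simpa using this

/-! ### Cointegrals and the antipode -/

/-- For a left cointegral, `S(y)Λ₁ ⊗ Λ₂ = Λ₁ ⊗ yΛ₂`: both sides are `S(y₁)y₂Λ₁ ⊗ y₃Λ₂`. -/
lemma antipode_mul_delta (D : HopfGCoalgebra k G H) {a b : G} (h : a * b = 1) (h' : b * a = 1)
    {Λ : H 1} (hΛ : ∀ x : H 1, x * Λ = D.ε x • Λ) (y : H b) :
    (D.anti h' y ⊗ₜ[k] (1 : H b)) * D.cop h Λ = ((1 : H a) ⊗ₜ[k] y) * D.cop h Λ := by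
  set T := D.cop h Λ with hT
  -- `Φ (x ⊗ t) = (S(x) ⊗ 1) t T`
  let Φ : H b ⊗[k] (H a ⊗[k] H b) →ₗ[k] H a ⊗[k] H b := TensorProduct.lift
    (((LinearMap.mul k (H a ⊗[k] H b)).compr₂ ((LinearMap.mulRight k T))) ∘ₗ
      ((TensorProduct.mk k (H a) (H b)).flip 1 ∘ₗ D.anti h'))
  have hΦ : ∀ x t, Φ (x ⊗ₜ t) = (D.anti h' x ⊗ₜ[k] (1 : H b)) * t * T := fun x t => rfl
  have e1 : ∀ t : H b ⊗[k] H 1, Φ (TensorProduct.map LinearMap.id (D.cop h).toLinearMap t)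
      = (D.anti h' (TensorProduct.rid k (H b)
          (TensorProduct.map LinearMap.id D.ε.toLinearMap t)) ⊗ₜ[k] (1 : H b)) * T := by
    intro t
    induction t with
    | zero => simp
    | add s t hs ht => simp only [map_add, hs, ht, TensorProduct.add_tmul, add_mul]
    | tmul x z =>
      have : D.cop h z * T = D.ε z • T := by rw [hT, ← map_mul, hΛ, map_smul]
      simp [hΦ, mul_assoc, this, ← TensorProduct.smul_tmul']
  have e2 : ∀ (s : H b ⊗[k] H a) (z : H b), Φ (TensorProduct.assoc k _ _ _ (s ⊗ₜ z))
      = (LinearMap.mul' k (H a) (TensorProduct.map (D.anti h') LinearMap.id s) ⊗ₜ[k] z) * T := by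
    intro s z
    induction s with
    | zero => simp
    | add s t hs ht => simp only [map_add, hs, ht, TensorProduct.add_tmul, add_mul]
    | tmul x w => simp [hΦ]
  have e3 : ∀ t : H 1 ⊗[k] H b, Φ (TensorProduct.assoc k _ _ _
        (TensorProduct.map (D.cop h').toLinearMap LinearMap.id t))
      = ((1 : H a) ⊗ₜ[k] (TensorProduct.lid k (H b)
          (TensorProduct.map D.ε.toLinearMap LinearMap.id t))) * T := by
    intro t
    induction t with
    | zero => simp
    | add s t hs ht => simp only [map_add, hs, ht, TensorProduct.tmul_add, add_mul]
    | tmul x z =>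
      have := e2 (D.cop h' x) z
      rw [cop_antipode_left] at this
      simpa [TensorProduct.smul_tmul] using this
  have key := D.cop_coassoc h' h (one_mul b) (mul_one b) y
  have := congrArg Φ key
  rw [e1, e3, cop_counit_left, cop_counit_right] at this
  exact this.symm

/-- For a right cointegral, `Λ₁u ⊗ Λ₂ = Λ₁ ⊗ Λ₂S(u)`: both sides are `Λ₁u₁ ⊗ Λ₂u₂S(u₃)`. -/
lemma delta_mul_antipode (D : HopfGCoalgebra k G H) {a b : G} (h : a * b = 1) (h' : b * a = 1)
    {Λ : H 1} (hΛ : ∀ x : H 1, Λ * x = D.ε x • Λ) (u : H a) :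
    D.cop h Λ * (u ⊗ₜ[k] (1 : H b)) = D.cop h Λ * ((1 : H a) ⊗ₜ[k] D.anti h u) := by
  set T := D.cop h Λ with hT
  -- `Φ (t ⊗ x) = T t (1 ⊗ S(x))`
  let Φ : (H a ⊗[k] H b) ⊗[k] H a →ₗ[k] H a ⊗[k] H b := LinearMap.mulLeft k T ∘ₗ
    TensorProduct.lift ((LinearMap.mul k (H a ⊗[k] H b)).compl₂
      (TensorProduct.mk k (H a) (H b) 1 ∘ₗ D.anti h))
  have hΦ : ∀ t x, Φ (t ⊗ₜ x) = T * (t * ((1 : H a) ⊗ₜ[k] D.anti h x)) := fun x t => rfl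
  have e1 : ∀ t : H 1 ⊗[k] H a, Φ (TensorProduct.map (D.cop h).toLinearMap LinearMap.id t)
      = T * ((1 : H a) ⊗ₜ[k] D.anti h (TensorProduct.lid k (H a)
          (TensorProduct.map D.ε.toLinearMap LinearMap.id t))) := by
    intro t
    induction t with
    | zero => simp
    | add s t hs ht => simp only [map_add, hs, ht, TensorProduct.tmul_add, mul_add]
    | tmul z x =>
      have : T * D.cop h z = D.ε z • T := by rw [hT, ← map_mul, hΛ, map_smul]
      simp [hΦ, ← mul_assoc, this]
  have e2 : ∀ (s : H b ⊗[k] H a) (z : H a), Φ ((TensorProduct.assoc k _ _ _).symm (z ⊗ₜ s))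
      = T * (z ⊗ₜ[k] LinearMap.mul' k (H b) (TensorProduct.map LinearMap.id (D.anti h) s)) := by
    intro s z
    induction s with
    | zero => simp
    | add s t hs ht => simp only [map_add, hs, ht, TensorProduct.tmul_add, mul_add]
    | tmul x w => simp [hΦ]
  have e3 : ∀ t : H a ⊗[k] H 1, Φ ((TensorProduct.assoc k _ _ _).symm
        (TensorProduct.map LinearMap.id (D.cop h').toLinearMap t))
      = T * ((TensorProduct.rid k (H a)
          (TensorProduct.map LinearMap.id D.ε.toLinearMap t)) ⊗ₜ[k] (1 : H b)) := by
    intro t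
    induction t with
    | zero => simp
    | add s t hs ht => simp only [map_add, hs, ht, TensorProduct.add_tmul, mul_add]
    | tmul z x =>
      have := e2 (D.cop h' x) z
      rw [cop_antipode_right] at this
      simpa [TensorProduct.smul_tmul'] using this
  have key := D.cop_coassoc h h' (one_mul a) (mul_one a) u
  rw [← LinearEquiv.eq_symm_apply] at key
  have := congrArg Φ key
  rw [e1, e3, cop_counit_left, cop_counit_right] at this
  exact this.symm

/-! ### Vanishing criteria -/

/-- If `φ(x₁z)x₂ = 0` for all `z`, then `φ(y)x = φ(x₁S(x₂)y)x₃` vanishes: expand `S(x₂)y` in a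
basis of `H_a`. -/
lemma smul_eq_zero_of_right (D : HopfGCoalgebra k G H) {a b : G} [FiniteDimensional k (H a)]
    (h : a * b = 1) (h' : b * a = 1) (φ : H a →ₗ[k] k) (x : H 1)
    (hx : ∀ z : H a, TensorProduct.lid k (H b)
      (TensorProduct.map (φ ∘ₗ LinearMap.mulRight k z) LinearMap.id (D.cop h x)) = 0)
    (y : H a) : φ y • x = 0 := by
  let B := Module.finBasis k (H a)
  -- `Ψ (p ⊗ (q ⊗ r)) = φ(p S(q) y) r`
  let Ψ : H a ⊗[k] (H b ⊗[k] H 1) →ₗ[k] H 1 := TensorProduct.lid k (H 1) ∘ₗ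
    TensorProduct.map (φ ∘ₗ LinearMap.mulRight k y ∘ₗ LinearMap.mul' k (H a) ∘ₗ
      TensorProduct.map LinearMap.id (D.anti h')) LinearMap.id ∘ₗ
      (TensorProduct.assoc k (H a) (H b) (H 1)).symm.toLinearMap
  -- `Θ i (q ⊗ r) = Bᵢ*(S(q) y) r`
  let Θ : Fin _ → H b ⊗[k] H 1 →ₗ[k] H 1 := fun i => TensorProduct.lid k (H 1) ∘ₗ
    TensorProduct.map (B.coord i ∘ₗ LinearMap.mulRight k y ∘ₗ D.anti h') LinearMap.id
  have e0 : ∀ (p : H a) (s : H b ⊗[k] H 1), Ψ (p ⊗ₜ s) = ∑ i, φ (p * B i) • Θ i s := by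
    intro p s
    induction s with
    | zero => simp
    | add s t hs ht => simp only [map_add, hs, ht, TensorProduct.tmul_add, smul_add,
        Finset.sum_add_distrib]
    | tmul q r =>
      have : φ (p * (D.anti h' q * y)) = ∑ i, φ (p * B i) * B.repr (D.anti h' q * y) i := by
        conv_lhs => rw [← B.sum_repr (D.anti h' q * y), Finset.mul_sum, map_sum]
        exact Finset.sum_congr rfl fun i _ => by
          rw [mul_smul_comm, map_smul, smul_eq_mul, mul_comm]
      simp [Ψ, Θ, mul_assoc, this, Finset.sum_smul, smul_smul]
  have e1 : ∀ t : H a ⊗[k] H b, Ψ (TensorProduct.map LinearMap.id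
        (D.cop (mul_one b)).toLinearMap t) = ∑ i, Θ i (D.cop (mul_one b)
          (TensorProduct.lid k (H b)
            (TensorProduct.map (φ ∘ₗ LinearMap.mulRight k (B i)) LinearMap.id t))) := by
    intro t
    induction t with
    | zero => simp
    | add s t hs ht => simp only [map_add, hs, ht, Finset.sum_add_distrib]
    | tmul p q => simp [e0]
  have e2 : ∀ t : H 1 ⊗[k] H 1, Ψ (TensorProduct.assoc k _ _ _
        (TensorProduct.map (D.cop h).toLinearMap LinearMap.id t))
      = φ y • TensorProduct.lid k (H 1) (TensorProduct.map D.ε.toLinearMap LinearMap.id t) := by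
    intro t
    induction t with
    | zero => simp
    | add s t hs ht => simp only [map_add, hs, ht, smul_add]
    | tmul p q =>
      simp [Ψ, cop_antipode_right, smul_smul, mul_comm]
  have key := congrArg Ψ (D.cop_coassoc h (mul_one b) (mul_one 1) h x)
  rw [e2, cop_counit_left, e1] at key
  simpa [hx] using key

/-- If `x₁φ(zx₂) = 0` for all `z`, then `φ(y)x = x₁φ(yS(x₂)x₃)` vanishes: expand `yS(x₂)` in a
basis of `H_b`. -/
lemma smul_eq_zero_of_left (D : HopfGCoalgebra k G H) {a b : G} [FiniteDimensional k (H b)]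
    (h : a * b = 1) (φ : H b →ₗ[k] k) (x : H 1)
    (hx : ∀ z : H b, TensorProduct.rid k (H a)
      (TensorProduct.map LinearMap.id (φ ∘ₗ LinearMap.mulLeft k z) (D.cop h x)) = 0)
    (y : H b) : φ y • x = 0 := by
  let B := Module.finBasis k (H b)
  -- `Ψ ((r ⊗ q) ⊗ p) = φ(y S(q) p) r`
  let Ψ : (H 1 ⊗[k] H a) ⊗[k] H b →ₗ[k] H 1 := TensorProduct.rid k (H 1) ∘ₗ
    TensorProduct.map LinearMap.id (φ ∘ₗ LinearMap.mulLeft k y ∘ₗ LinearMap.mul' k (H b) ∘ₗ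
      TensorProduct.map (D.anti h) LinearMap.id) ∘ₗ
      (TensorProduct.assoc k (H 1) (H a) (H b)).toLinearMap
  -- `Θ i (r ⊗ q) = Bᵢ*(y S(q)) r`
  let Θ : Fin _ → H 1 ⊗[k] H a →ₗ[k] H 1 := fun i => TensorProduct.rid k (H 1) ∘ₗ
    TensorProduct.map LinearMap.id (B.coord i ∘ₗ LinearMap.mulLeft k y ∘ₗ D.anti h)
  have e0 : ∀ (p : H b) (s : H 1 ⊗[k] H a), Ψ (s ⊗ₜ p) = ∑ i, φ (B i * p) • Θ i s := by
    intro p s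
    induction s with
    | zero => simp
    | add s t hs ht => simp only [map_add, hs, ht, TensorProduct.add_tmul, smul_add,
        Finset.sum_add_distrib]
    | tmul r q =>
      have : φ ((y * D.anti h q) * p) = ∑ i, φ (B i * p) * B.repr (y * D.anti h q) i := by
        conv_lhs => rw [← B.sum_repr (y * D.anti h q), Finset.sum_mul, map_sum]
        exact Finset.sum_congr rfl fun i _ => by
          rw [smul_mul_assoc, map_smul, smul_eq_mul, mul_comm]
      simp [Ψ, Θ, ← mul_assoc, this, Finset.sum_smul, smul_smul]
  have e1 : ∀ t : H a ⊗[k] H b, Ψ (TensorProduct.map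
        (D.cop (one_mul a)).toLinearMap LinearMap.id t) = ∑ i, Θ i (D.cop (one_mul a)
          (TensorProduct.rid k (H a)
            (TensorProduct.map LinearMap.id (φ ∘ₗ LinearMap.mulLeft k (B i)) t))) := by
    intro t
    induction t with
    | zero => simp
    | add s t hs ht => simp only [map_add, hs, ht, Finset.sum_add_distrib]
    | tmul p q => simp [e0]
  have e2 : ∀ t : H 1 ⊗[k] H 1, Ψ ((TensorProduct.assoc k _ _ _).symm
        (TensorProduct.map LinearMap.id (D.cop h).toLinearMap t))
      = φ y • TensorProduct.rid k (H 1) (TensorProduct.map LinearMap.id D.ε.toLinearMap t) := by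
    intro t
    induction t with
    | zero => simp
    | add s t hs ht => simp only [map_add, hs, ht, smul_add]
    | tmul p q =>
      simp [Ψ, cop_antipode_left, smul_smul, mul_comm]
  have key := D.cop_coassoc (one_mul a) h h (mul_one 1) x
  rw [← LinearEquiv.eq_symm_apply] at key
  have key := congrArg Ψ key
  rw [e2, cop_counit_right, e1] at key
  simpa [hx] using key.symm

/-! ### The twisted symmetry of integrals -/

/-- Linear algebra common to both sides: a map `E` from the dual of `A` to a space of dimension
`dim A` that is surjective is injective, so forms on `A` are determined by their images. -/
lemma form_eq_of_pairing {A B : Type} [AddCommGroup A] [Module k A] [FiniteDimensional k A]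
    [AddCommGroup B] [Module k B] [FiniteDimensional k B] {c : k} (hc : c ≠ 0)
    (E : Module.Dual k A →ₗ[k] B) (L : B → Module.Dual k A) (R : A → Module.Dual k A)
    (s : A →ₗ[k] B) (s' : B →ₗ[k] A) (hs : Function.Injective s) (hs' : Function.Injective s')
    (hL : ∀ y, E (L y) = c • y) (hR : ∀ u, E (R u) = c • s u) :
    (∀ u, R u = L (s u)) ∧ ∀ u, R u = 0 → u = 0 := by
  have hsurj : Function.Surjective E := fun y =>
    ⟨c⁻¹ • L y, by rw [map_smul, hL, inv_smul_smul₀ hc]⟩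
  have hdim : Module.finrank k (Module.Dual k A) = Module.finrank k B := by
    rw [Subspace.dual_finrank_eq]
    exact le_antisymm (LinearMap.finrank_le_finrank_of_injective hs)
      (LinearMap.finrank_le_finrank_of_injective hs')
  have hinj : Function.Injective E :=
    (LinearMap.injective_iff_surjective_of_finrank_eq_finrank hdim).mpr hsurj
  refine ⟨fun u => hinj (by rw [hR, hL]), fun u hu => ?_⟩
  have := hR u
  rw [hu, map_zero] at this
  exact hs (by rw [map_zero]; exact (smul_eq_zero.mp this.symm).resolve_left hc)

/-- A nonzero right integral satisfies `μ(w u) = μ(g u g⁻¹ w)` and is nondegenerate. -/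
lemma rightIntegral_twisted {D : HopfGCoalgebra k G H} [∀ γ : G, FiniteDimensional k (H γ)]
    {g : ∀ γ : G, (H γ)ˣ} (hg : D.IsPivot g) (huni : D.IsUnimodular)
    {μ : ∀ γ : G, H γ →ₗ[k] k} (hμ : D.IsRightIntegral μ) (a : G) (ha : μ a ≠ 0) :
    (∀ u w : H a, μ a (w * u) = μ a ((g a : H a) * u * ((g a)⁻¹ : (H a)ˣ) * w)) ∧
      ∀ u : H a, (∀ w, μ a (w * u) = 0) → u = 0 := by
  obtain ⟨Λ, hΛ0, hΛ⟩ := huni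
  have h : a * a⁻¹ = 1 := mul_inv_cancel a
  have h' : a⁻¹ * a = 1 := inv_mul_cancel a
  -- `E φ = φ(Λ₁)Λ₂`
  let ev : H a ⊗[k] H a⁻¹ → Module.Dual k (H a) →ₗ[k] H a⁻¹ := fun t =>
    { toFun := fun φ => TensorProduct.lid k _ (TensorProduct.map φ LinearMap.id t)
      map_add' := fun φ ψ => by simp [TensorProduct.map_add_left]
      map_smul' := fun r φ => by simp [TensorProduct.map_smul_left] }
  have ev_def : ∀ t φ, ev t φ = TensorProduct.lid k _ (TensorProduct.map φ LinearMap.id t) :=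
    fun _ _ => rfl
  have hint : ev (D.cop h Λ) (μ a) = μ 1 Λ • 1 := cop_rightIntegral hμ h Λ
  have hL : ∀ y : H a⁻¹, ev (D.cop h Λ) (μ a ∘ₗ LinearMap.mulLeft k (D.anti h' y))
      = μ 1 Λ • y := by
    intro y
    have m1 : ∀ t, ev t (μ a ∘ₗ LinearMap.mulLeft k (D.anti h' y))
        = ev ((D.anti h' y ⊗ₜ[k] (1 : H a⁻¹)) * t) (μ a) := by
      intro t
      simp only [ev_def]
      induction t with
      | zero => simp
      | add s t hs ht => simp only [map_add, mul_add, hs, ht]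
      | tmul p q => simp
    have m2 : ∀ t, ev (((1 : H a) ⊗ₜ[k] y) * t) (μ a) = y * ev t (μ a) := by
      intro t
      simp only [ev_def]
      induction t with
      | zero => simp
      | add s t hs ht => simp only [map_add, mul_add, hs, ht]
      | tmul p q => simp
    rw [m1, D.antipode_mul_delta h h' (fun x => (hΛ x).1), m2, hint]
    simp
  have hR : ∀ u : H a, ev (D.cop h Λ) (μ a ∘ₗ LinearMap.mulRight k u)
      = μ 1 Λ • D.anti h u := by
    intro u
    have m1 : ∀ t, ev t (μ a ∘ₗ LinearMap.mulRight k u)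
        = ev (t * (u ⊗ₜ[k] (1 : H a⁻¹))) (μ a) := by
      intro t
      simp only [ev_def]
      induction t with
      | zero => simp
      | add s t hs ht => simp only [map_add, add_mul, hs, ht]
      | tmul p q => simp
    have m2 : ∀ t, ev (t * ((1 : H a) ⊗ₜ[k] D.anti h u)) (μ a) = ev t (μ a) * D.anti h u := by
      intro t
      simp only [ev_def]
      induction t with
      | zero => simp
      | add s t hs ht => simp only [map_add, add_mul, hs, ht]
      | tmul p q => simp
    rw [m1, D.delta_mul_antipode h h' (fun x => (hΛ x).2), m2, hint]
    simp
  have hc : μ 1 Λ ≠ 0 := by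
    intro hc
    apply ha
    ext y
    refine (smul_eq_zero.mp
      (D.smul_eq_zero_of_right h h' (μ a) Λ (fun z => ?_) y)).resolve_right hΛ0
    have := hR z
    rwa [hc, zero_smul] at this
  obtain ⟨h1, h2⟩ := form_eq_of_pairing hc (ev (D.cop h Λ)) _ _ (D.anti h) (D.anti h')
    (anti_injective hg h) (anti_injective hg h') hL hR
  refine ⟨fun u w => ?_, fun u hu => h2 u (LinearMap.ext fun w => hu w)⟩
  have := LinearMap.congr_fun (h1 u) w
  rw [← anti_anti hg h h']
  exact this

/-- A nonzero left integral satisfies `μ(u w) = μ(w g u g⁻¹)` and is nondegenerate. -/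
lemma leftIntegral_twisted {D : HopfGCoalgebra k G H} [∀ γ : G, FiniteDimensional k (H γ)]
    {g : ∀ γ : G, (H γ)ˣ} (hg : D.IsPivot g) (huni : D.IsUnimodular)
    {μ : ∀ γ : G, H γ →ₗ[k] k} (hμ : D.IsLeftIntegral μ) (a : G) (ha : μ a ≠ 0) :
    (∀ u w : H a, μ a (u * w) = μ a (w * ((g a : H a) * u * ((g a)⁻¹ : (H a)ˣ)))) ∧
      ∀ u : H a, (∀ w, μ a (u * w) = 0) → u = 0 := by
  obtain ⟨Λ, hΛ0, hΛ⟩ := huni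
  have h : a * a⁻¹ = 1 := mul_inv_cancel a
  have h' : a⁻¹ * a = 1 := inv_mul_cancel a
  -- `E φ = Λ₁φ(Λ₂)`
  let ev : H a⁻¹ ⊗[k] H a → Module.Dual k (H a) →ₗ[k] H a⁻¹ := fun t =>
    { toFun := fun φ => TensorProduct.rid k _ (TensorProduct.map LinearMap.id φ t)
      map_add' := fun φ ψ => by simp [TensorProduct.map_add_right]
      map_smul' := fun r φ => by simp [TensorProduct.map_smul_right] }
  have ev_def : ∀ t φ, ev t φ = TensorProduct.rid k _ (TensorProduct.map LinearMap.id φ t) :=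
    fun _ _ => rfl
  have hint : ev (D.cop h' Λ) (μ a) = μ 1 Λ • 1 := cop_leftIntegral hμ h' Λ
  have hR : ∀ u : H a, ev (D.cop h' Λ) (μ a ∘ₗ LinearMap.mulLeft k u)
      = μ 1 Λ • D.anti h u := by
    intro u
    have m1 : ∀ t, ev t (μ a ∘ₗ LinearMap.mulLeft k u)
        = ev (((1 : H a⁻¹) ⊗ₜ[k] u) * t) (μ a) := by
      intro t
      simp only [ev_def]
      induction t with
      | zero => simp
      | add s t hs ht => simp only [map_add, mul_add, hs, ht]
      | tmul p q => simp
    have m2 : ∀ t, ev ((D.anti h u ⊗ₜ[k] (1 : H a)) * t) (μ a) = D.anti h u * ev t (μ a) := by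
      intro t
      simp only [ev_def]
      induction t with
      | zero => simp
      | add s t hs ht => simp only [map_add, mul_add, hs, ht]
      | tmul p q => simp
    rw [m1, ← D.antipode_mul_delta h' h (fun x => (hΛ x).1), m2, hint]
    simp
  have hL : ∀ y : H a⁻¹, ev (D.cop h' Λ) (μ a ∘ₗ LinearMap.mulRight k (D.anti h' y))
      = μ 1 Λ • y := by
    intro y
    have m1 : ∀ t, ev t (μ a ∘ₗ LinearMap.mulRight k (D.anti h' y))
        = ev (t * ((1 : H a⁻¹) ⊗ₜ[k] D.anti h' y)) (μ a) := by
      intro t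
      simp only [ev_def]
      induction t with
      | zero => simp
      | add s t hs ht => simp only [map_add, add_mul, hs, ht]
      | tmul p q => simp
    have m2 : ∀ t, ev (t * (y ⊗ₜ[k] (1 : H a))) (μ a) = ev t (μ a) * y := by
      intro t
      simp only [ev_def]
      induction t with
      | zero => simp
      | add s t hs ht => simp only [map_add, add_mul, hs, ht]
      | tmul p q => simp
    rw [m1, ← D.delta_mul_antipode h' h (fun x => (hΛ x).2), m2, hint]
    simp
  have hc : μ 1 Λ ≠ 0 := by
    intro hc
    apply ha
    ext y
    refine (smul_eq_zero.mp
      (D.smul_eq_zero_of_left h' (μ a) Λ (fun z => ?_) y)).resolve_right hΛ0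
    have := hR z
    rwa [hc, zero_smul] at this
  obtain ⟨h1, h2⟩ := form_eq_of_pairing hc (ev (D.cop h' Λ)) _ _ (D.anti h) (D.anti h')
    (anti_injective hg h) (anti_injective hg h') hL hR
  refine ⟨fun u w => ?_, fun u hu => h2 u (LinearMap.ext fun w => hu w)⟩
  have := LinearMap.congr_fun (h1 u) w
  rw [← anti_anti hg h h']
  exact this

end HopfGCoalgebra

open HopfGCoalgebra in
/-- For a finite type unimodular pivotal Hopf `G`-coalgebra, the symmetrised right and left
`G`-integrals are symmetric and non-degenerate. -/
theorem symmetrised_integrals_symmetric_nondegenerate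
    {k G : Type} [Field k] [Group G] {H : G → Type}
    [∀ γ : G, Ring (H γ)] [∀ γ : G, Algebra k (H γ)] [∀ γ : G, FiniteDimensional k (H γ)]
    (D : HopfGCoalgebra k G H) (g : ∀ γ : G, (H γ)ˣ) (hpiv : D.IsPivot g)
    (huni : D.IsUnimodular)
    (μ : ∀ γ : G, H γ →ₗ[k] k) (hμ : D.IsRightIntegral μ) (hμ0 : ∀ γ : G, μ γ ≠ 0)
    (μl : ∀ γ : G, H γ →ₗ[k] k) (hμl : D.IsLeftIntegral μl) (hμl0 : ∀ γ : G, μl γ ≠ 0) :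
    (∀ (γ : G) (x y : H γ),
        μ γ ((g γ : H γ) * (x * y)) = μ γ ((g γ : H γ) * (y * x)))
    ∧ (∀ (γ : G) (y : H γ), (∀ x : H γ, μ γ ((g γ : H γ) * (x * y)) = 0) → y = 0)
    ∧ (∀ (γ : G) (x y : H γ),
        μl γ (((g γ)⁻¹ : (H γ)ˣ) * (x * y)) = μl γ (((g γ)⁻¹ : (H γ)ˣ) * (y * x)))
    ∧ (∀ (γ : G) (y : H γ),
        (∀ x : H γ, μl γ (((g γ)⁻¹ : (H γ)ˣ) * (x * y)) = 0) → y = 0) := by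
  refine ⟨fun γ x y => ?_, fun γ y hy => ?_, fun γ x y => ?_, fun γ y hy => ?_⟩
  · have := (rightIntegral_twisted hpiv huni hμ γ (hμ0 γ)).1 y (g γ * x)
    simpa [mul_assoc] using this
  · refine (rightIntegral_twisted hpiv huni hμ γ (hμ0 γ)).2 y fun w => ?_
    simpa [mul_assoc] using hy (((g γ)⁻¹ : (H γ)ˣ) * w)
  · have e := (leftIntegral_twisted hpiv huni hμl γ (hμl0 γ)).1
    -- both sides equal `μ(y x g⁻¹)`
    have e1 := e (((g γ)⁻¹ : (H γ)ˣ) * x) y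
    have e2 := e (((g γ)⁻¹ : (H γ)ˣ) : H γ) (y * x)
    simp only [mul_assoc, Units.mul_inv_cancel_left] at e1 e2 ⊢
    rw [e1, e2]
  · -- `μ(g⁻¹ (w g) y) = μ(y w)`, so `y` lies in the kernel `{u | μ(u w) = 0 for all w}`
    have e := (leftIntegral_twisted hpiv huni hμl γ (hμl0 γ)).1
    refine (leftIntegral_twisted hpiv huni hμl γ (hμl0 γ)).2 y fun w => ?_
    have e1 := e (((g γ)⁻¹ : (H γ)ˣ) * (w * g γ)) y
    simp only [mul_assoc, Units.mul_inv_cancel_left, Units.mul_inv, mul_one] at e1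
    rw [← e1]
    simpa [mul_assoc] using hy (w * g γ)
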